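/- arXiv:2505.12866 — 3 statements merged into one kernel-verified Lean document; each statement's English description precedes it below -/
import Mathlib

section
/- Let 𝒢 be a hereditary graph class that does not contain all clique partition graphs (i.e., some disjoint union of complete graphs does not belong to 𝒢). Then 𝒢 is (tw,ω)-bounded if and only if 𝒢 has bounded tree-independence number. -/
open SimpleGraph

/-- The independence number of the subgraph of `G` induced by `s`:
the supremum of sizes of independent sets contained in `s`. -/
noncomputable def setIndepNum {V : Type*} (G : SimpleGraph V) (s : Set V) : ℕ :=
  sSup {n | ∃ t : Finset V, ↑t ⊆ s ∧ (∀ u ∈ t, ∀ v ∈ t, u ≠ v → ¬ G.Adj u v) ∧ t.card = n}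

/-- A tree decomposition of a graph `G`. -/
structure TreeDecomp {V : Type*} (G : SimpleGraph V) where
  ι : Type
  T : SimpleGraph ι
  tree : T.IsTree
  bag : ι → Set V
  bag_vert : ∀ v : V, ∃ i, v ∈ bag i
  bag_edge : ∀ u v : V, G.Adj u v → ∃ i, u ∈ bag i ∧ v ∈ bag i
  bag_conn : ∀ v : V, (T.induce {i | v ∈ bag i}).Connected

/-- The tree-independence number of `G`: the least `n` such that `G` has a tree
decomposition all of whose bags induce subgraphs with independence number at most `n`. -/
noncomputable def treeIndepNum {V : Type*} (G : SimpleGraph V) : ℕ :=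
  sInf {n | ∃ D : TreeDecomp G, ∀ i, setIndepNum G (D.bag i) ≤ n}

/-- The treewidth of `G`: the least `n` such that `G` has a tree decomposition
all of whose bags have at most `n + 1` vertices. -/
noncomputable def treewidth {V : Type*} (G : SimpleGraph V) : ℕ :=
  sInf {n | ∃ D : TreeDecomp G, ∀ i, (D.bag i).ncard ≤ n + 1}

/-- A finite graph, bundled. -/
structure FinGraph : Type 1 where
  V : Type
  finite : Finite V
  G : SimpleGraph V

/-- A class of (finite) graphs is `(tw, ω)`-bounded if there is a function `f` such that every
induced subgraph `G'` of a graph in the class satisfies `tw(G') ≤ f(ω(G'))`. -/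
def TwOmegaBounded (C : Set FinGraph) : Prop :=
  ∃ f : ℕ → ℕ, ∀ A ∈ C, ∀ s : Set A.V,
    treewidth (A.G.induce s) ≤ f ((A.G.induce s).cliqueNum)

/-- A class of graphs has bounded tree-independence number. -/
def BddTreeIndep (C : Set FinGraph) : Prop :=
  ∃ c : ℕ, ∀ A ∈ C, treeIndepNum A.G ≤ c

/-- A graph class is hereditary if it contains every graph isomorphic to an induced
subgraph of one of its members. -/
def Hereditary (C : Set FinGraph) : Prop :=
  ∀ A ∈ C, ∀ B : FinGraph, Nonempty (B.G ↪g A.G) → B ∈ C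

/-- `G` is a clique partition graph (disjoint union of complete graphs): there is a
partition of the vertices (given by the fibers of some map) such that two distinct
vertices are adjacent iff they lie in the same part. -/
def IsCliquePartitionGraph {V : Type*} (G : SimpleGraph V) : Prop :=
  ∃ (ι : Type) (f : V → ι), ∀ u v : V, u ≠ v → (G.Adj u v ↔ f u = f v)

/-
If bags have independence number at most `c`, Ramsey's theorem bounds their size in terms of `c` and
the clique number.

Conversely, let `B` be a clique partition graph on `m` vertices that is not an induced subgraph of
`G`, and let `H` be a largest `K_{m+1}`-free set of vertices of `G`. The treewidth of `G[H]` is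
bounded, and the `m`-cliques of `G[H]` trace subtrees in an optimal tree decomposition of it. As
subtrees of a tree have the Erdős–Pósa property, either there are `m` pairwise anticomplete
`m`-cliques, which together contain a copy of `B`, or few vertices `S` meet all `m`-cliques in `H`.
In the latter case `H \ S` together with any independent set is `K_{m+1}`-free, so by the choice of
`H` the independent sets outside `H` have at most `|S|` vertices. Adding all vertices outside `H` to
every bag therefore gives a tree decomposition of `G` with small independence number.
-/

section Ramsey

variable {V : Type*} {G : SimpleGraph V}

theorem eq_empty_of_cliqueFreeOn_one {s : Set V} (h : G.CliqueFreeOn s 1) : s = ∅ :=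
  Set.eq_empty_of_forall_notMem fun v hv =>
    h (t := {v}) (by simpa using hv) (isNClique_singleton.2 rfl)

theorem card_lt_choose_of_cliqueFreeOn {S : Finset V} {a b : ℕ}
    (hclique : G.CliqueFreeOn S (a + 1)) (hindep : Gᶜ.CliqueFreeOn S (b + 1)) :
    S.card < (a + b).choose a := by
  classical
  induction a generalizing b S with
  | zero => simp [Finset.coe_eq_empty.1 (eq_empty_of_cliqueFreeOn_one hclique)]
  | succ a iha =>
    induction b generalizing S with
    | zero => simp [Finset.coe_eq_empty.1 (eq_empty_of_cliqueFreeOn_one hindep)]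
    | succ b ihb =>
      rcases S.eq_empty_or_nonempty with rfl | ⟨v, hv⟩
      · simpa using Nat.choose_pos (by omega)
      have hadj : (S.filter (G.Adj v)).card < (a + (b + 1)).choose a :=
        iha ((hclique.of_succ _ hv).subset _ fun w hw => by simpa using hw)
          (hindep.subset _ (Finset.filter_subset _ S))
      have hnonadj : (S.filter (Gᶜ.Adj v)).card < (a + 1 + b).choose (a + 1) :=
        ihb (hclique.subset _ (Finset.filter_subset _ S))
          ((hindep.of_succ _ hv).subset _ fun w hw => by simpa using hw)
      have hcover : S.erase v ⊆ S.filter (G.Adj v) ∪ S.filter (Gᶜ.Adj v) := by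
        intro w hw
        obtain ⟨hwv, hwS⟩ := Finset.mem_erase.1 hw
        by_cases h : G.Adj v w <;> simp [hwS, h, hwv.symm]
      have hcard := (Finset.card_le_card hcover).trans (Finset.card_union_le _ _)
      rw [Finset.card_erase_of_mem hv] at hcard
      rw [show a + 1 + (b + 1) = a + (b + 1) + 1 by ring, Nat.choose_succ_succ',
        show a + (b + 1) = a + 1 + b by ring]
      rw [show a + (b + 1) = a + 1 + b by ring] at hadj
      omega

end Ramsey

section Subtrees

variable {ι : Type*} {T : SimpleGraph ι} {A A' : Set ι} {r x x' y c : ι}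

theorem exists_isPath_subset_of_preconnected_induce (hA : (T.induce A).Preconnected) (hx : x ∈ A)
    (hy : y ∈ A) : ∃ p : T.Walk x y, p.IsPath ∧ ∀ c ∈ p.support, c ∈ A := by
  obtain ⟨p, hp⟩ := (hA ⟨x, hx⟩ ⟨y, hy⟩).exists_isPath
  refine ⟨p.map (Embedding.induce A).toHom, hp.map Subtype.val_injective, fun c hc => ?_⟩
  obtain ⟨d, -, rfl⟩ := List.mem_map.1 (p.support_map _ ▸ hc)
  exact d.2

theorem dist_lt_of_mem_support {q : T.Walk r x} (hq : q.length = T.dist r x) (hc : c ∈ q.support)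
    (hne : c ≠ x) : T.dist r c < T.dist r x := by
  classical
  calc T.dist r c ≤ (q.takeUntil c hc).length := dist_le _
    _ < q.length := q.length_takeUntil_lt_length hc hne
    _ = T.dist r x := hq

theorem isPath_append_of_dist_le {q : T.Walk r x} (hq : q.length = T.dist r x) {p : T.Walk x y}
    (hp : p.IsPath) (hmin : ∀ c ∈ p.support, T.dist r x ≤ T.dist r c) : (q.append p).IsPath := by
  have hnodup := hp.support_nodup
  rw [← Walk.cons_tail_support, List.nodup_cons] at hnodup
  rw [Walk.isPath_def, Walk.support_append, List.nodup_append']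
  refine ⟨(q.isPath_of_length_eq_dist hq).support_nodup, hnodup.2, fun c hcq hcp => ?_⟩
  have hcx : c ≠ x := fun h => hnodup.1 (h ▸ hcp)
  exact (hmin c (List.mem_of_mem_tail hcp)).not_gt (dist_lt_of_mem_support hq hcq hcx)

/-- Both paths from the root `r` to a common vertex, through `x` and through `x'`, coincide. -/
theorem mem_of_isMinOn_dist_of_not_disjoint (hT : T.IsTree) (hA : (T.induce A).Preconnected)
    (hA' : (T.induce A').Preconnected) (hx : x ∈ A) (hx' : x' ∈ A')
    (hmin : IsMinOn (T.dist r) A x) (hmin' : IsMinOn (T.dist r) A' x')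
    (hle : T.dist r x' ≤ T.dist r x) (hAA' : ¬Disjoint A A') : x ∈ A' := by
  obtain ⟨y, hy, hy'⟩ := Set.not_disjoint_iff.1 hAA'
  obtain ⟨q, -, hq⟩ := hT.connected.exists_path_of_dist r x
  obtain ⟨q', -, hq'⟩ := hT.connected.exists_path_of_dist r x'
  obtain ⟨p, hp, hpA⟩ := exists_isPath_subset_of_preconnected_induce hA hx hy
  obtain ⟨p', hp', hpA'⟩ := exists_isPath_subset_of_preconnected_induce hA' hx' hy'
  have heq : q.append p = q'.append p' := (hT.existsUnique_path r y).unique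
    (isPath_append_of_dist_le hq hp fun c hc => hmin (hpA c hc))
    (isPath_append_of_dist_le hq' hp' fun c hc => hmin' (hpA' c hc))
  have hxmem : x ∈ (q'.append p').support := by simp [← heq]
  rcases (Walk.mem_support_append_iff _ _).1 hxmem with hxq' | hxp'
  · by_cases hxx' : x = x'
    · exact hxx' ▸ hx'
    · exact absurd (dist_lt_of_mem_support hq' hxq' hxx') hle.not_gt
  · exact hpA' x hxp'

/-- Greedily: the member whose top is farthest from the root meets only members that contain its
top. -/
theorem exists_pairwiseDisjoint_and_transversal {κ : Type*} (hT : T.IsTree) (A : κ → Set ι)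
    (s : Finset κ) (hA : ∀ k ∈ s, (T.induce (A k)).Connected) :
    ∃ t ⊆ s, (t : Set κ).PairwiseDisjoint A ∧
      ∃ X : Finset ι, X.card ≤ t.card ∧ ∀ k ∈ s, ∃ x ∈ X, x ∈ A k := by
  classical
  induction s using Finset.strongInduction with
  | H s ih =>
    rcases s.eq_empty_or_nonempty with rfl | hs
    · exact ⟨∅, by simp, by simp, ∅, by simp, by simp⟩
    obtain ⟨r⟩ := hT.connected.nonempty
    have hnonempty : ∀ k ∈ s, (A k).Nonempty := fun k hk =>
      Set.nonempty_coe_sort.1 (hA k hk).nonempty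
    have : Nonempty ι := ⟨r⟩
    choose! top htop hmin using fun k (hk : k ∈ s) =>
      (⟨_, Function.argminOn_mem (T.dist r) (A k) (hnonempty k hk),
        fun _ ha => Function.argminOn_le (T.dist r) (A k) ha⟩ :
        ∃ x ∈ A k, IsMinOn (T.dist r) (A k) x)
    obtain ⟨k₀, hk₀, hmax⟩ := s.exists_max_image (fun k => T.dist r (top k)) hs
    have hdisj : ∀ k ∈ s, top k₀ ∉ A k → Disjoint (A k₀) (A k) := fun k hk hnotMem => by
      by_contra hmeet
      exact hnotMem (mem_of_isMinOn_dist_of_not_disjoint hT (hA k₀ hk₀).preconnected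
        (hA k hk).preconnected (htop k₀ hk₀) (htop k hk) (hmin k₀ hk₀) (hmin k hk) (hmax k hk)
        hmeet)
    obtain ⟨t, hts, ht, X, hXt, hX⟩ := ih {k ∈ s | top k₀ ∉ A k}
      (Finset.filter_ssubset.2 ⟨k₀, hk₀, not_not.2 (htop k₀ hk₀)⟩)
      fun k hk => hA k (Finset.mem_filter.1 hk).1
    have ht_mem : ∀ k ∈ t, k ∈ s ∧ top k₀ ∉ A k := fun k hk => Finset.mem_filter.1 (hts hk)
    have hk₀t : k₀ ∉ t := fun h => (ht_mem k₀ h).2 (htop k₀ hk₀)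
    refine ⟨insert k₀ t, Finset.insert_subset hk₀ fun k hk => (ht_mem k hk).1, ?_,
      insert (top k₀) X, ?_, fun k hk => ?_⟩
    · rw [Finset.coe_insert]
      exact ht.insert fun k hk _ => hdisj k (ht_mem k hk).1 (ht_mem k hk).2
    · rw [Finset.card_insert_of_notMem hk₀t]
      exact (Finset.card_insert_le _ _).trans (Nat.succ_le_succ hXt)
    · by_cases htopk : top k₀ ∈ A k
      · exact ⟨top k₀, Finset.mem_insert_self _ _, htopk⟩
      · obtain ⟨x, hxX, hxk⟩ := hX k (Finset.mem_filter.2 ⟨hk, htopk⟩)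
        exact ⟨x, Finset.mem_insert_of_mem hxX, hxk⟩

end Subtrees

/-- Two vertex sets are anticomplete in `G` if they are disjoint and no edge of `G` joins them. -/
def Anticomplete {V : Type*} (G : SimpleGraph V) (s t : Set V) : Prop :=
  ∀ u ∈ s, ∀ v ∈ t, u ≠ v ∧ ¬G.Adj u v

namespace TreeDecomp

variable {V W : Type*} {G : SimpleGraph V} {G' : SimpleGraph W}

/-- The nodes whose bags meet a given set of vertices. -/
def nodes (D : TreeDecomp G) (s : Set V) : Set D.ι :=
  {i | ∃ v ∈ s, v ∈ D.bag i}

theorem connected_induce_nodes (D : TreeDecomp G) {K : Set V} (hK : G.IsClique K)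
    (hne : K.Nonempty) : (D.T.induce (D.nodes K)).Connected := by
  have hnodes : D.nodes K = ⋃₀ ((fun v => {i | v ∈ D.bag i}) '' K) := by
    ext i
    simp [nodes]
  rw [hnodes]
  refine induce_sUnion_connected_of_pairwise_not_disjoint (hne.image _) ?_ ?_
  · rintro _ _ ⟨u, hu, rfl⟩ ⟨v, hv, rfl⟩
    by_cases huv : u = v
    · obtain ⟨i, hi⟩ := D.bag_vert u
      exact ⟨i, hi, huv ▸ hi⟩
    · exact D.bag_edge u v (hK hu hv huv)
  · rintro _ ⟨v, -, rfl⟩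
    exact D.bag_conn v

theorem anticomplete_of_disjoint_nodes (D : TreeDecomp G) {s t : Set V}
    (h : Disjoint (D.nodes s) (D.nodes t)) : Anticomplete G s t := by
  refine fun u hu v hv => ⟨?_, fun huv => ?_⟩
  · rintro rfl
    obtain ⟨i, hi⟩ := D.bag_vert u
    exact Set.disjoint_left.1 h ⟨u, hu, hi⟩ ⟨u, hv, hi⟩
  · obtain ⟨i, hui, hvi⟩ := D.bag_edge u v huv
    exact Set.disjoint_left.1 h ⟨u, hu, hui⟩ ⟨v, hv, hvi⟩

theorem exists_pairwise_anticomplete_and_hittingSet (D : TreeDecomp G) {w : ℕ}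
    (hw : ∀ i, (D.bag i).ncard ≤ w) (F : Finset (Finset V))
    (hF : ∀ K ∈ F, G.IsClique (K : Set V) ∧ K.Nonempty) :
    ∃ t ⊆ F, (t : Set (Finset V)).Pairwise (fun K L => Anticomplete G K L) ∧
      ∃ S : Set V, S.ncard ≤ t.card * w ∧ ∀ K ∈ F, ∃ v ∈ K, v ∈ S := by
  obtain ⟨t, htF, ht, X, hXt, hX⟩ := exists_pairwiseDisjoint_and_transversal D.tree
    (fun K : Finset V => D.nodes K) F fun K hK => D.connected_induce_nodes (hF K hK).1 (hF K hK).2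
  refine ⟨t, htF, ht.imp fun K L => D.anticomplete_of_disjoint_nodes, ⋃ i ∈ X, D.bag i, ?_,
    fun K hK => ?_⟩
  · calc (⋃ i ∈ X, D.bag i).ncard ≤ ∑ i ∈ X, (D.bag i).ncard := X.set_ncard_biUnion_le _
      _ ≤ X.card * w := Finset.sum_le_card_nsmul _ _ _ fun i _ => hw i
      _ ≤ t.card * w := Nat.mul_le_mul_right w hXt
  · obtain ⟨i, hiX, v, hvK, hvi⟩ := hX K hK
    exact ⟨v, hvK, Set.mem_biUnion hiX hvi⟩

/-- The tree decomposition with a single bag; it shows that treewidth and tree-independence number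
are infima of nonempty sets. -/
def trivial (G : SimpleGraph V) : TreeDecomp G where
  ι := Unit
  T := ⊥
  tree := IsTree.of_subsingleton
  bag _ := Set.univ
  bag_vert _ := ⟨(), Set.mem_univ _⟩
  bag_edge _ _ _ := ⟨(), Set.mem_univ _, Set.mem_univ _⟩
  bag_conn _ := (induceUnivIso _).connected_iff.2 IsTree.of_subsingleton.connected

/-- The pullback of a tree decomposition along a graph homomorphism. -/
def comap (f : G →g G') (D : TreeDecomp G') : TreeDecomp G where
  ι := D.ι
  T := D.T
  tree := D.tree
  bag i := f ⁻¹' D.bag i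
  bag_vert v := D.bag_vert (f v)
  bag_edge _ _ huv := D.bag_edge _ _ (f.map_adj huv)
  bag_conn v := D.bag_conn (f v)

theorem exists_mem_image_bag_union_compl {H : Set V} (D : TreeDecomp (G.induce H)) (v : V) :
    ∃ i, v ∈ Subtype.val '' D.bag i ∪ Hᶜ := by
  by_cases hv : v ∈ H
  · obtain ⟨i, hi⟩ := D.bag_vert ⟨v, hv⟩
    exact ⟨i, Or.inl ⟨_, hi, rfl⟩⟩
  · obtain ⟨i⟩ := D.tree.connected.nonempty
    exact ⟨i, Or.inr hv⟩

/-- The tree decomposition of `G` obtained from one of an induced subgraph `G[H]` by adding all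
vertices outside `H` to every bag. -/
def extend {H : Set V} (D : TreeDecomp (G.induce H)) : TreeDecomp G where
  ι := D.ι
  T := D.T
  tree := D.tree
  bag i := Subtype.val '' D.bag i ∪ Hᶜ
  bag_vert := D.exists_mem_image_bag_union_compl
  bag_edge u v huv := by
    by_cases hu : u ∈ H
    · by_cases hv : v ∈ H
      · obtain ⟨i, hui, hvi⟩ := D.bag_edge ⟨u, hu⟩ ⟨v, hv⟩ huv
        exact ⟨i, Or.inl ⟨_, hui, rfl⟩, Or.inl ⟨_, hvi, rfl⟩⟩
      · exact (D.exists_mem_image_bag_union_compl u).imp fun i hui => ⟨hui, Or.inr hv⟩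
    · exact (D.exists_mem_image_bag_union_compl v).imp fun i hvi => ⟨Or.inr hu, hvi⟩
  bag_conn v := by
    by_cases hv : v ∈ H
    · have hbag : {i | v ∈ Subtype.val '' D.bag i ∪ Hᶜ} = {i | ⟨v, hv⟩ ∈ D.bag i} := by
        ext i
        simp [hv]
      exact hbag ▸ D.bag_conn ⟨v, hv⟩
    · have hbag : {i | v ∈ Subtype.val '' D.bag i ∪ Hᶜ} = Set.univ := by
        ext i
        simp [hv]
      exact hbag ▸ (induceUnivIso D.T).connected_iff.2 D.tree.connected

end TreeDecomp

section IndependenceNumber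

variable {V W : Type*} {G : SimpleGraph V} {G' : SimpleGraph W} {s t : Set V} {n : ℕ}

theorem card_le_setIndepNum [Finite V] {I : Finset V} (hIs : (I : Set V) ⊆ s)
    (hI : G.IsIndepSet (I : Set V)) : I.card ≤ setIndepNum G s := by
  cases nonempty_fintype V
  refine le_csSup ⟨Fintype.card V, ?_⟩ ⟨I, hIs, fun u hu v hv => hI hu hv, rfl⟩
  rintro _ ⟨J, -, -, rfl⟩
  exact J.card_le_univ

theorem setIndepNum_le
    (h : ∀ I : Finset V, (I : Set V) ⊆ s → G.IsIndepSet (I : Set V) → I.card ≤ n) :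
    setIndepNum G s ≤ n := by
  refine csSup_le' ?_
  rintro _ ⟨I, hIs, hI, rfl⟩
  exact h I hIs fun u hu v hv => hI u hu v hv

theorem cliqueFreeOn_compl_of_setIndepNum_lt [Finite V] (h : setIndepNum G s < n) :
    Gᶜ.CliqueFreeOn s n := fun I hIs hI => by
  rw [isNClique_compl] at hI
  exact h.not_ge (hI.card_eq ▸ card_le_setIndepNum hIs hI.isIndepSet)

theorem setIndepNum_le_ncard [Finite V] : setIndepNum G s ≤ s.ncard :=
  setIndepNum_le fun I hIs _ => Set.ncard_coe_finset I ▸ Set.ncard_le_ncard hIs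

theorem setIndepNum_union_le [Finite V] :
    setIndepNum G (s ∪ t) ≤ setIndepNum G s + setIndepNum G t := by
  classical
  refine setIndepNum_le fun I hI hindep => ?_
  rw [← Finset.card_filter_add_card_filter_not (s := I) (· ∈ s)]
  refine add_le_add
    (card_le_setIndepNum (fun v hv => (Finset.mem_filter.1 hv).2)
      (hindep.mono (Finset.coe_subset.2 (Finset.filter_subset _ _))))
    (card_le_setIndepNum (fun v hv => ?_)
      (hindep.mono (Finset.coe_subset.2 (Finset.filter_subset _ _))))
  obtain ⟨hvI, hvs⟩ := Finset.mem_filter.1 hv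
  exact (hI hvI).resolve_left hvs

theorem setIndepNum_preimage_le [Finite W] (f : G ↪g G') (s : Set W) :
    setIndepNum G (f ⁻¹' s) ≤ setIndepNum G' s := by
  refine setIndepNum_le fun I hIs hI => ?_
  rw [← I.card_map f.toEmbedding]
  refine card_le_setIndepNum ?_ ?_
  · simpa using hIs
  · rw [Finset.coe_map]
    rintro _ ⟨u, hu, rfl⟩ _ ⟨v, hv, rfl⟩ huv
    exact fun hadj => hI hu hv (fun h => huv (congrArg _ h)) (f.map_adj_iff.1 hadj)

end IndependenceNumber

section Parameters

variable {V W : Type*} {G : SimpleGraph V} {G' : SimpleGraph W}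

theorem exists_treeDecomp_ncard_le_treewidth_add_one (G : SimpleGraph V) :
    ∃ D : TreeDecomp G, ∀ i, (D.bag i).ncard ≤ treewidth G + 1 :=
  Nat.sInf_mem (s := {n | ∃ D : TreeDecomp G, ∀ i, (D.bag i).ncard ≤ n + 1})
    ⟨(Set.univ : Set V).ncard, TreeDecomp.trivial G, fun _ => Nat.le_succ _⟩

theorem exists_treeDecomp_setIndepNum_le_treeIndepNum (G : SimpleGraph V) :
    ∃ D : TreeDecomp G, ∀ i, setIndepNum G (D.bag i) ≤ treeIndepNum G :=
  Nat.sInf_mem (s := {n | ∃ D : TreeDecomp G, ∀ i, setIndepNum G (D.bag i) ≤ n})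
    ⟨setIndepNum G Set.univ, TreeDecomp.trivial G, fun _ => le_rfl⟩

theorem treeIndepNum_le_of_embedding [Finite W] (f : G ↪g G') :
    treeIndepNum G ≤ treeIndepNum G' := by
  obtain ⟨D, hD⟩ := exists_treeDecomp_setIndepNum_le_treeIndepNum G'
  exact Nat.sInf_le ⟨D.comap f.toHom, fun i => (setIndepNum_preimage_le f _).trans (hD i)⟩

theorem treewidth_le_choose [Finite V] (G : SimpleGraph V) :
    treewidth G ≤ (G.cliqueNum + treeIndepNum G).choose G.cliqueNum := by
  obtain ⟨D, hD⟩ := exists_treeDecomp_setIndepNum_le_treeIndepNum G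
  refine Nat.sInf_le ⟨D, fun i => ?_⟩
  obtain ⟨S, hS⟩ := (D.bag i).toFinite.exists_finset_coe
  have hclique : G.CliqueFreeOn S (G.cliqueNum + 1) := fun K _ hK =>
    (hK.card_eq ▸ hK.isClique.card_le_cliqueNum).not_gt (Nat.lt_succ_self _)
  have hindep : Gᶜ.CliqueFreeOn S (treeIndepNum G + 1) :=
    cliqueFreeOn_compl_of_setIndepNum_lt (Nat.lt_succ_of_le (hS ▸ hD i))
  rw [← hS, Set.ncard_coe_finset]
  exact (card_lt_choose_of_cliqueFreeOn hclique hindep).le.trans (Nat.le_succ _)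

theorem treeIndepNum_le_treewidth_induce_add [Finite V] (G : SimpleGraph V) (H : Set V) :
    treeIndepNum G ≤ treewidth (G.induce H) + 1 + setIndepNum G Hᶜ := by
  obtain ⟨D, hD⟩ := exists_treeDecomp_ncard_le_treewidth_add_one (G.induce H)
  refine Nat.sInf_le ⟨D.extend, fun i => ?_⟩
  calc setIndepNum G (Subtype.val '' D.bag i ∪ Hᶜ)
      ≤ setIndepNum G (Subtype.val '' D.bag i) + setIndepNum G Hᶜ := setIndepNum_union_le
    _ ≤ (Subtype.val '' D.bag i).ncard + setIndepNum G Hᶜ := by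
        gcongr
        exact setIndepNum_le_ncard
    _ = (D.bag i).ncard + setIndepNum G Hᶜ := by
        rw [Set.ncard_image_of_injective _ Subtype.val_injective]
    _ ≤ treewidth (G.induce H) + 1 + setIndepNum G Hᶜ := by
        gcongr
        exact hD i

end Parameters

section LargestCliqueFreeSet

variable {V : Type*} {G : SimpleGraph V} {m : ℕ} {s I H S : Set V}

theorem cliqueFreeOn_image_val {s : Set H} (hs : (G.induce H).CliqueFreeOn s m) :
    G.CliqueFreeOn (Subtype.val '' s) m := by
  classical
  intro K hK hKc
  obtain ⟨L, hLs, rfl⟩ := Finset.subset_set_image_iff.1 hK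
  refine hs hLs ((isNClique_induce_iff H L m).2 ?_)
  rwa [Finset.map_eq_image]

theorem cliqueFreeOn_union_of_isIndepSet (hs : G.CliqueFreeOn s m) (hI : G.IsIndepSet I) :
    G.CliqueFreeOn (s ∪ I) (m + 1) := by
  classical
  intro K hK hKc
  obtain ⟨a, haK, ha⟩ : ∃ a ∈ K, ∀ v ∈ K, v ∈ I → v = a := by
    by_cases h : ∃ a ∈ K, a ∈ I
    · obtain ⟨a, haK, haI⟩ := h
      refine ⟨a, haK, fun v hvK hvI => ?_⟩
      by_contra hva
      exact hI hvI haI hva (hKc.isClique hvK haK hva)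
    · push Not at h
      obtain ⟨a, haK⟩ : K.Nonempty := Finset.card_pos.1 (by simp [hKc.card_eq])
      exact ⟨a, haK, fun v hvK hvI => absurd hvI (h v hvK)⟩
  refine hs (fun v hv => ?_) (hKc.erase_of_mem haK)
  obtain ⟨hva, hvK⟩ := Finset.mem_erase.1 hv
  exact (hK hvK).resolve_right fun hvI => hva (ha v hvK hvI)

theorem setIndepNum_compl_le_ncard [Finite V]
    (hH : MaximalFor (fun s => G.CliqueFreeOn s (m + 1)) Set.ncard H)
    (hS : G.CliqueFreeOn (H \ S) m) : setIndepNum G Hᶜ ≤ S.ncard := by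
  refine setIndepNum_le fun I hIH hI => ?_
  have hle : (H \ S ∪ I).ncard ≤ H.ncard :=
    (le_total _ _).elim id (hH.2 (cliqueFreeOn_union_of_isIndepSet hS hI))
  have hdisj : Disjoint (H \ S) (I : Set V) :=
    Set.disjoint_left.2 fun v hv hvI => hIH hvI hv.1
  rw [Set.ncard_union_eq hdisj, Set.ncard_coe_finset] at hle
  have hdiff := Set.le_ncard_sdiff S H
  omega

end LargestCliqueFreeSet

namespace IsCliquePartitionGraph

variable {U V : Type*} {B : SimpleGraph U} {G : SimpleGraph V}

theorem exists_partMap {κ : Type*} (hB : IsCliquePartitionGraph B) (label : U ↪ κ) :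
    ∃ part : U → κ, ∀ u v, u ≠ v → (B.Adj u v ↔ part u = part v) := by
  obtain ⟨ι, f, hf⟩ := hB
  refine ⟨fun u => label (Set.rangeSplitting f ⟨f u, Set.mem_range_self u⟩), fun u v huv => ?_⟩
  rw [hf u v huv, label.injective.eq_iff, (Set.rangeSplitting_injective f).eq_iff, Subtype.mk.injEq]

variable [Finite U]

theorem nonempty_embedding (hB : IsCliquePartitionGraph B) {t : Finset (Finset V)}
    (ht : Nat.card U ≤ t.card) (hclique : ∀ K ∈ t, G.IsNClique (Nat.card U) K)
    (hanti : (t : Set (Finset V)).Pairwise fun K L => Anticomplete G K L) :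
    Nonempty (B ↪g G) := by
  cases nonempty_fintype U
  obtain ⟨label⟩ : Nonempty (U ↪ t) :=
    Function.Embedding.nonempty_of_card_le (by simpa using ht)
  obtain ⟨part, hpart⟩ := hB.exists_partMap label
  have e : ∀ K : t, U ≃ K.1 := fun K =>
    Fintype.equivOfCardEq (by simp [(hclique K K.2).card_eq])
  let φ : U → V := fun u => e (part u) u
  have hφ_mem : ∀ u, φ u ∈ (part u).1 := fun u => (e (part u) u).2
  have hφ_anti : ∀ u v, part u ≠ part v → φ u ≠ φ v ∧ ¬G.Adj (φ u) (φ v) := fun u v huv =>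
    hanti (part u).2 (part v).2 (Subtype.val_injective.ne huv) _ (hφ_mem u) _ (hφ_mem v)
  have hφ_inj : Function.Injective φ := fun u v huv => by
    by_cases h : part u = part v
    · have heq : φ v = e (part u) v := by rw [h]
      exact (e (part u)).injective (Subtype.val_injective (huv.trans heq))
    · exact absurd huv (hφ_anti u v h).1
  refine ⟨⟨⟨φ, hφ_inj⟩, fun {u v} => ?_⟩⟩
  rcases eq_or_ne u v with rfl | huv
  · simp
  rw [hpart u v huv]
  refine ⟨fun hadj => not_not.1 fun h => (hφ_anti u v h).2 hadj, fun h => ?_⟩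
  exact (hclique _ (part u).2).isClique (hφ_mem u) (h ▸ hφ_mem v) (hφ_inj.ne huv)

theorem exists_hittingSet [Finite V] (hB : IsCliquePartitionGraph B) (hBG : IsEmpty (B ↪g G)) :
    ∃ S : Set V, S.ncard + (treewidth G + 1) ≤ Nat.card U * (treewidth G + 1) ∧
      G.CliqueFreeOn Sᶜ (Nat.card U) := by
  classical
  cases nonempty_fintype V
  have : Nonempty U := not_isEmpty_iff.1 fun _ => hBG.false (RelEmbedding.ofIsEmpty B.Adj G.Adj)
  obtain ⟨D, hD⟩ := exists_treeDecomp_ncard_le_treewidth_add_one G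
  obtain ⟨t, htF, ht, S, hSt, hS⟩ := D.exists_pairwise_anticomplete_and_hittingSet hD
    {K | G.IsNClique (Nat.card U) K} fun K hK => by
      have hK := (Finset.mem_filter.1 hK).2
      exact ⟨hK.isClique, Finset.card_pos.1 (hK.card_eq ▸ Nat.card_pos)⟩
  have htU : t.card < Nat.card U := by
    by_contra! hle
    exact (not_isEmpty_iff.2 (hB.nonempty_embedding hle
      (fun K hK => (Finset.mem_filter.1 (htF hK)).2) ht)) hBG
  refine ⟨S, ?_, fun K hKS hK => ?_⟩
  · calc S.ncard + (treewidth G + 1) ≤ t.card * (treewidth G + 1) + (treewidth G + 1) := by gcongr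
      _ = (t.card + 1) * (treewidth G + 1) := by ring
      _ ≤ Nat.card U * (treewidth G + 1) := by gcongr; exact htU
  · obtain ⟨v, hvK, hvS⟩ := hS K (by simpa using hK)
    exact hKS hvK hvS

theorem treeIndepNum_le [Finite V] (hB : IsCliquePartitionGraph B) (hBG : IsEmpty (B ↪g G))
    {w : ℕ}
    (hw : ∀ s : Set V, G.CliqueFreeOn s (Nat.card U + 1) → treewidth (G.induce s) ≤ w) :
    treeIndepNum G ≤ Nat.card U * (w + 1) := by
  obtain ⟨H, hH⟩ :=
    (Set.toFinite {s : Set V | G.CliqueFreeOn s (Nat.card U + 1)}).exists_maximalFor Set.ncard _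
      ⟨∅, by simp⟩
  obtain ⟨S, hScard, hS⟩ := hB.exists_hittingSet (G := G.induce H)
    ⟨fun φ => hBG.false ((Embedding.induce H).comp φ)⟩
  have hHS : G.CliqueFreeOn (H \ Subtype.val '' S) (Nat.card U) := by
    rw [← Set.image_val_compl]
    exact cliqueFreeOn_image_val hS
  calc treeIndepNum G ≤ treewidth (G.induce H) + 1 + setIndepNum G Hᶜ :=
        treeIndepNum_le_treewidth_induce_add G H
    _ ≤ treewidth (G.induce H) + 1 + (Subtype.val '' S).ncard := by
        gcongr
        exact setIndepNum_compl_le_ncard hH hHS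
    _ = S.ncard + (treewidth (G.induce H) + 1) := by
        rw [Set.ncard_image_of_injective _ Subtype.val_injective, add_comm]
    _ ≤ Nat.card U * (treewidth (G.induce H) + 1) := hScard
    _ ≤ Nat.card U * (w + 1) := by
        gcongr
        exact hw H hH.1

end IsCliquePartitionGraph

theorem BddTreeIndep.twOmegaBounded {C : Set FinGraph} (h : BddTreeIndep C) :
    TwOmegaBounded C := by
  obtain ⟨c, hc⟩ := h
  refine ⟨fun ω => (ω + c).choose ω, fun A hA s => ?_⟩
  have := A.finite
  have hα : treeIndepNum (A.G.induce s) ≤ c :=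
    (treeIndepNum_le_of_embedding (Embedding.induce s)).trans (hc A hA)
  exact (treewidth_le_choose _).trans (Nat.choose_le_choose _ (by omega))

theorem TwOmegaBounded.bddTreeIndep {C : Set FinGraph} (h : TwOmegaBounded C) {U : Type*}
    [Finite U] {B : SimpleGraph U} (hB : IsCliquePartitionGraph B)
    (hBC : ∀ A ∈ C, IsEmpty (B ↪g A.G)) : BddTreeIndep C := by
  obtain ⟨f, hf⟩ := h
  refine ⟨Nat.card U * ((Finset.range (Nat.card U + 1)).sup f + 1), fun A hA => ?_⟩
  have := A.finite
  refine hB.treeIndepNum_le (hBC A hA) fun s hs => ?_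
  have hω : (A.G.induce s).cliqueNum < Nat.card U + 1 := by
    by_contra! hle
    obtain ⟨K, hK⟩ := (A.G.induce s).exists_isNClique_cliqueNum
    exact ((cliqueFree_induce_iff _ _ _).2 hs).mono hle K hK
  exact (hf A hA s).trans (Finset.le_sup (f := f) (Finset.mem_range.2 hω))

theorem stmt_0_general (𝒢 : Set FinGraph)
    (hmiss : ∃ B : FinGraph, IsCliquePartitionGraph B.G ∧ ∀ A ∈ 𝒢, IsEmpty (B.G ↪g A.G)) :
    TwOmegaBounded 𝒢 ↔ BddTreeIndep 𝒢 := by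
  obtain ⟨B, hB, hB𝒢⟩ := hmiss
  have := B.finite
  exact ⟨fun h => h.bddTreeIndep hB hB𝒢, fun h => h.twOmegaBounded⟩

/-- Let `𝒢` be a hereditary graph class that does not contain all clique
partition graphs. Then `𝒢` is `(tw, ω)`-bounded iff `𝒢` has bounded tree-independence number. -/
theorem stmt_0 (𝒢 : Set FinGraph) (hered : Hereditary 𝒢)
    (hmiss : ∃ B : FinGraph, IsCliquePartitionGraph B.G ∧ B ∉ 𝒢) :
    TwOmegaBounded 𝒢 ↔ BddTreeIndep 𝒢 := by
  obtain ⟨B, hB, hB𝒢⟩ := hmiss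
  exact stmt_0_general 𝒢 ⟨B, hB, fun A hA => ⟨fun φ => hB𝒢 (hered A hA B ⟨φ⟩)⟩⟩
end

section
/- For every positive integer s, every 2K_{1,s}-subgraph-free graph has at most one vertex of degree greater than 2s; equivalently, if G is 2K_{1,s}-subgraph-free and v is a vertex of G with degree at least 2s+1, then every vertex w ≠ v of G has degree at most s. -/
open SimpleGraph

/-- `G` is `H`-subgraph-free: no subgraph of `G` is isomorphic to `H`,
i.e. there is no injective graph homomorphism from `H` to `G`. -/
def SubgraphFree {W V : Type*} (H : SimpleGraph W) (G : SimpleGraph V) : Prop :=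
  ¬ ∃ f : H →g G, Function.Injective f

/-- The star `K_{1,s}`. -/
def starGraph (s : ℕ) : SimpleGraph (Fin 1 ⊕ Fin s) := completeBipartiteGraph (Fin 1) (Fin s)

/-- `2K_{1,s}`: the disjoint union of two copies of the star `K_{1,s}`. -/
def twoStars (s : ℕ) : SimpleGraph ((Fin 1 ⊕ Fin s) ⊕ (Fin 1 ⊕ Fin s)) :=
  starGraph s ⊕g starGraph s

/-! Suppose `v` has more than `2s` neighbours and some `w ≠ v` has more than `s`. Choose `s`
neighbours of `w` other than `v` as the leaves of a star centred at `w`. This star has `s + 1`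
vertices, so `v` still has `s` neighbours outside it: the leaves of a second, disjoint star. -/

theorem subgraphFree_iff_free {W V : Type*} {H : SimpleGraph W} {G : SimpleGraph V} :
    SubgraphFree H G ↔ H.Free G :=
  not_congr ⟨fun ⟨f, hf⟩ ↦ ⟨f.toCopy hf⟩, fun ⟨f⟩ ↦ ⟨f.toHom, f.injective⟩⟩

theorem exists_finset_subset_sdiff_card_eq {α : Type*} {A : Set α} {B : Finset α} {n : ℕ}
    (h : (n + B.card : ℕ) ≤ A.encard) : ∃ T : Finset α, (T : Set α) ⊆ A \ B ∧ T.card = n := by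
  have hn : (n : ℕ∞) ≤ (A \ B).encard := by
    refine (ENat.add_le_add_iff_right (ENat.natCast_ne_top B.card)).mp ?_
    calc (n : ℕ∞) + B.card ≤ A.encard := mod_cast h
      _ ≤ (A ∪ B).encard := Set.encard_le_encard Set.subset_union_left
      _ = (A \ B).encard + B.card := by
        rw [← Set.encard_sdiff_add_encard, Set.encard_coe_eq_coe_finsetCard]
  obtain ⟨T, hTA, hT⟩ := Set.exists_subset_encard_eq hn
  lift T to Finset α using Set.finite_of_encard_eq_coe hT
  exact ⟨T, hTA, by simpa using hT⟩

section Containment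

variable {V : Type*} {G : SimpleGraph V}

theorem sum_isContained_of_disjoint_range {α β : Type*} {A : SimpleGraph α} {B : SimpleGraph β}
    (f : Copy A G) (g : Copy B G) (hfg : Disjoint (Set.range f) (Set.range g)) : A ⊕g B ⊑ G := by
  refine ⟨⟨⟨Sum.elim f g, ?_⟩, f.injective.sumElim g.injective fun a b ↦
    hfg.ne_of_mem ⟨a, rfl⟩ ⟨b, rfl⟩⟩⟩
  rintro (a | b) (a' | b') h
  · exact f.toHom.map_adj (sum_adj_inl.mp h)
  · simp at h
  · simp at h
  · exact g.toHom.map_adj (sum_adj_inr.mp h)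

theorem exists_copy_starGraph_range_eq {c : V} {L : Finset V} {s : ℕ}
    (hL : (L : Set V) ⊆ G.neighborSet c) (hs : L.card = s) :
    ∃ f : Copy (_root_.starGraph s) G, Set.range f = insert c (L : Set V) := by
  let leaf : Fin s ≃ L := (L.equivFinOfCardEq hs).symm
  have adj_leaf (i : Fin s) : G.Adj c (leaf i) := hL (leaf i).2
  have leaf_injective : Function.Injective fun i ↦ (leaf i : V) :=
    Subtype.val_injective.comp leaf.injective
  refine ⟨⟨⟨Sum.elim (fun _ ↦ c) (fun i ↦ leaf i), ?_⟩,
    (Function.injective_of_subsingleton _).sumElim leaf_injective fun _ i ↦ (adj_leaf i).ne⟩, ?_⟩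
  · rintro (i | i) (j | j) h
    · simp [_root_.starGraph] at h
    · exact adj_leaf j
    · exact (adj_leaf i).symm
    · simp [_root_.starGraph] at h
  · have range_leaf : Set.range (fun i ↦ (leaf i : V)) = L := by
      simpa [Function.comp_def] using leaf.surjective.range_comp ((↑) : L → V)
    calc Set.range (Sum.elim (fun _ : Fin 1 ↦ c) fun i ↦ (leaf i : V))
        = Set.range (fun _ : Fin 1 ↦ c) ∪ Set.range (fun i ↦ (leaf i : V)) := Set.Sum.elim_range _ _
      _ = insert c (L : Set V) := by rw [Set.range_const, range_leaf, Set.singleton_union]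

theorem starGraph_sum_starGraph_isContained {v w : V} {s t : ℕ} (hvw : v ≠ w)
    (hw : (s + 1 : ℕ) ≤ (G.neighborSet w).encard)
    (hv : (t + (s + 1) : ℕ) ≤ (G.neighborSet v).encard) :
    _root_.starGraph s ⊕g _root_.starGraph t ⊑ G := by
  classical
  obtain ⟨S, hS, hS_card⟩ := exists_finset_subset_sdiff_card_eq (B := {v}) hw
  have hwS : w ∉ S := fun h ↦ G.irrefl (hS h).1
  obtain ⟨T, hT, hT_card⟩ := exists_finset_subset_sdiff_card_eq (B := insert w S)
    (by rwa [Finset.card_insert_of_notMem hwS, hS_card])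
  obtain ⟨f, hf⟩ := exists_copy_starGraph_range_eq (fun _ hx ↦ (hS hx).1) hS_card
  obtain ⟨g, hg⟩ := exists_copy_starGraph_range_eq (fun _ hx ↦ (hT hx).1) hT_card
  have hv_notMem : v ∉ insert w (S : Set V) := by
    rintro (h | h)
    · exact hvw h
    · exact (hS h).2 (by simp)
  have hT_disjoint : Disjoint (insert w (S : Set V)) T := by
    rw [← Finset.coe_insert]
    exact (Set.subset_sdiff.mp hT).2.symm
  refine sum_isContained_of_disjoint_range f g ?_
  rw [hf, hg]
  exact Set.disjoint_insert_right.mpr ⟨hv_notMem, hT_disjoint⟩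

end Containment

theorem encard_neighborSet_eq_degree {V : Type*} (G : SimpleGraph V) (v : V)
    [Fintype (G.neighborSet v)] : (G.neighborSet v).encard = G.degree v :=
  Set.encard_eq_coe_toFinset_card _

theorem stmt_3_general {V : Type*} {G : SimpleGraph V} {s : ℕ}
    (hfree : SubgraphFree (twoStars s) G) {v : V}
    (hv : (2 * s + 1 : ℕ) ≤ (G.neighborSet v).encard) {w : V} (hwv : w ≠ v) :
    (G.neighborSet w).encard ≤ s := by
  by_contra! hw
  refine subgraphFree_iff_free.mp hfree (starGraph_sum_starGraph_isContained hwv.symm ?_ ?_)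
  · exact mod_cast Order.add_one_le_of_lt hw
  · rwa [← add_assoc, ← two_mul]

/-- For every positive integer `s`, if `G` is a `2K_{1,s}`-subgraph-free
graph and `v` is a vertex of degree at least `2s + 1`, then every vertex `w ≠ v` has degree
at most `s` (so `G` has at most one vertex of degree greater than `2s`). -/
theorem stmt_3 (s : ℕ) (hs : 0 < s) {V : Type} [Fintype V] (G : SimpleGraph V)
    [DecidableRel G.Adj] (hfree : SubgraphFree (twoStars s) G)
    (v : V) (hv : 2 * s + 1 ≤ G.degree v) :
    ∀ w : V, w ≠ v → G.degree w ≤ s := by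
  simp only [← Nat.cast_le (α := ℕ∞), ← encard_neighborSet_eq_degree] at hv ⊢
  exact fun w hwv ↦ stmt_3_general hfree hv hwv
end

section
/- For every graph G, the complement of the line graph of G does not contain two independent cycles, that is, it has no two vertex-disjoint cycles with no edge between them (it is 𝒪_2-free). -/
open SimpleGraph

/-- `G` contains `k` pairwise independent cycles: `k` cycles that are pairwise
vertex-disjoint with no edge between any two of them. -/
def HasIndepCycles {V : Type*} (G : SimpleGraph V) (k : ℕ) : Prop :=
  ∃ (a : Fin k → V) (w : ∀ i : Fin k, G.Walk (a i) (a i)),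
    (∀ i, (w i).IsCycle) ∧
    ∀ i j : Fin k, i ≠ j →
      ∀ u ∈ (w i).support, ∀ v ∈ (w j).support, u ≠ v ∧ ¬ G.Adj u v

/-- `G` is `𝒪_k`-free: it does not contain `k` pairwise independent cycles. -/
def OkFree {V : Type*} (G : SimpleGraph V) (k : ℕ) : Prop :=
  ¬ HasIndepCycles G k

/-!
Two edges of `G` are adjacent in the complement of `L(G)` exactly when they share no endpoint.
Suppose an edge `ef` of the complement is independent of a path `x`, `y`, `z`, and let `e = ab` and
`f = cd`, where `y` meets `e` in `a` and `f` in `c`. Each of `x` and `z` meets `e` and `f` but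
avoids `a` and `c`, so both are the pair `bd`. Hence `x = z`, which is impossible for the two
neighbours of `y` on a cycle.
-/

theorem mem_right_of_not_disjoint_mk {V : Type*} {t : Sym2 V} {p q : V}
    (hmeet : ¬ Disjoint (t : Set V) s(p, q)) (hp : p ∉ t) : q ∈ t := by
  obtain ⟨v, hvt, hv⟩ := Set.not_disjoint_iff.1 hmeet
  rcases Sym2.mem_iff.1 hv with rfl | rfl
  · exact absurd hvt hp
  · exact hvt

theorem sym2_subsingleton_disjoint_and_not_disjoint {V : Type*} {e f y : Sym2 V}
    (hef : Disjoint (e : Set V) f) (hye : ¬ Disjoint (y : Set V) e)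
    (hyf : ¬ Disjoint (y : Set V) f) :
    {t : Sym2 V | Disjoint (y : Set V) t ∧ ¬ Disjoint (t : Set V) e ∧
      ¬ Disjoint (t : Set V) f}.Subsingleton := by
  obtain ⟨a, hay, hae⟩ := Set.not_disjoint_iff.1 hye
  obtain ⟨c, hcy, hcf⟩ := Set.not_disjoint_iff.1 hyf
  obtain ⟨b, rfl⟩ := Sym2.mem_iff_exists.1 hae
  obtain ⟨d, rfl⟩ := Sym2.mem_iff_exists.1 hcf
  have hne : b ≠ d :=
    hef.ne_of_mem (Sym2.mem_mk_right a b) (Sym2.mem_mk_right c d)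
  have eq_mk : ∀ t : Sym2 V, Disjoint (y : Set V) t → ¬ Disjoint (t : Set V) s(a, b) →
      ¬ Disjoint (t : Set V) s(c, d) → t = s(b, d) := fun t hyt hte htf ↦
    (Sym2.mem_and_mem_iff hne).1
      ⟨mem_right_of_not_disjoint_mk hte (hyt.notMem_of_mem_left hay),
        mem_right_of_not_disjoint_mk htf (hyt.notMem_of_mem_left hcy)⟩
  rintro x ⟨hyx, hxe, hxf⟩ z ⟨hyz, hze, hzf⟩
  rw [eq_mk x hyx hxe hxf, eq_mk z hyz hze hzf]

theorem compl_lineGraph_adj_iff_disjoint {V : Type*} {G : SimpleGraph V} {e f : G.edgeSet} :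
    G.lineGraphᶜ.Adj e f ↔ Disjoint ((e : Sym2 V) : Set V) (f : Sym2 V) := by
  have ne_of_disjoint (h : Disjoint ((e : Sym2 V) : Set V) (f : Sym2 V)) : e ≠ f := by
    rintro rfl
    exact h.ne_of_mem (Sym2.out_fst_mem (e : Sym2 V)) (Sym2.out_fst_mem (e : Sym2 V)) rfl
  have adj_iff : G.lineGraph.Adj e f ↔
      e ≠ f ∧ ¬ Disjoint ((e : Sym2 V) : Set V) (f : Sym2 V) := by
    rw [Set.not_disjoint_iff_nonempty_inter]
    rfl
  rw [compl_adj, adj_iff]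
  tauto

theorem okFree_two_of_subsingleton_adj_and_not_adj {W : Type*} {H : SimpleGraph W}
    (h : ∀ e f y, H.Adj e f → ¬ H.Adj y e → ¬ H.Adj y f →
      {x | H.Adj y x ∧ ¬ H.Adj x e ∧ ¬ H.Adj x f}.Subsingleton) :
    OkFree H 2 := by
  rintro ⟨a, w, hcycle, hindep⟩
  have not_adj {u v : W} (hu : u ∈ (w 1).support) (hv : v ∈ (w 0).support) : ¬ H.Adj u v :=
    (hindep 1 0 (by decide) u hu v hv).2
  have start_mem := (w 0).start_mem_support
  have snd_mem : (w 0).snd ∈ (w 0).support := (w 0).getVert_mem_support 1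
  have mem_of_adj {x : W} (hx : x ∈ (w 1).support) (hadj : H.Adj (a 1) x) :
      x ∈ {x | H.Adj (a 1) x ∧ ¬ H.Adj x (a 0) ∧ ¬ H.Adj x (w 0).snd} :=
    ⟨hadj, not_adj hx start_mem, not_adj hx snd_mem⟩
  have subsingleton := h (a 0) (w 0).snd (a 1) ((w 0).adj_snd (hcycle 0).not_nil)
    (not_adj (w 1).start_mem_support start_mem) (not_adj (w 1).start_mem_support snd_mem)
  exact (hcycle 1).snd_ne_penultimate <| subsingleton
    (mem_of_adj ((w 1).getVert_mem_support _) ((w 1).adj_snd (hcycle 1).not_nil))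
    (mem_of_adj ((w 1).getVert_mem_support _) ((w 1).adj_penultimate (hcycle 1).not_nil).symm)

theorem stmt_8_general {V : Type*} (G : SimpleGraph V) : OkFree (G.lineGraph)ᶜ 2 := by
  refine okFree_two_of_subsingleton_adj_and_not_adj fun e f y hef hye hyf ↦ ?_
  simp only [compl_lineGraph_adj_iff_disjoint] at hef hye hyf ⊢
  exact (sym2_subsingleton_disjoint_and_not_disjoint hef hye hyf).preimage Subtype.val_injective

/-- For every graph `G`, the complement of the line graph of `G` does not
contain two independent cycles (it is `𝒪_2`-free). -/
theorem stmt_8 {V : Type} [Finite V] (G : SimpleGraph V) :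
    OkFree (G.lineGraph)ᶜ 2 :=
  stmt_8_general G
end
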